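/- arXiv:1409.3898 — 10 statements merged into one kernel-verified Lean document; each statement's English description precedes it below -/
import Mathlib

section
/- Let A be a finite set with a distinguished element 1 and an involution a ↦ ā, and let S be a unitary A×A complex matrix satisfying S_{ā,b} = conj(S_{a,b}) for all a,b ∈ A and S_{1,x} ≠ 0 for all x ∈ A. Define fusion multiplicities N^c_{ab} = Σ_{x∈A} S_{a,x} S_{b,x} conj(S_{c,x}) / S_{1,x} (the Verlinde formula), let V be the complex vector space with basis {f_a}_{a∈A} equipped with the bilinear product f_a · f_b = Σ_{c∈A} N^c_{ab} f_c, and set p_a = S_{1,a} Σ_{b∈A} conj(S_{b,a}) f_b. Then p_a · p_b = δ_{a,b} p_a for all a,b ∈ A, and Σ_{a∈A} p_a = f_1. -/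
open scoped BigOperators

/-- **Verlinde formula gives primitive idempotents.**
Let `A` be a finite set with a distinguished element `one` and an involution `inv`, and let
`S` be a unitary `A × A` complex matrix satisfying `S (inv a) b = conj (S a b)` and
`S one x ≠ 0`.  Define the fusion multiplicities by the Verlinde formula, let the Verlinde
algebra be `A → ℂ` with basis `f a = Pi.single a 1` and product determined bilinearly by
the structure constants `N`, and set `p a = S one a • (fun b => conj (S b a))`.
Then the `p a` are orthogonal idempotents summing to `f one`. -/
theorem verlinde_primitive_idempotents
    {A : Type*} [Fintype A] [DecidableEq A] (one : A) (inv : A → A)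
    (hinv : ∀ a, inv (inv a) = a)
    (S : Matrix A A ℂ) (hS : S ∈ Matrix.unitaryGroup A ℂ)
    (hconj : ∀ a b, S (inv a) b = (starRingEnd ℂ) (S a b))
    (hone : ∀ x, S one x ≠ 0)
    (N : A → A → A → ℂ)
    (hN : ∀ a b c, N a b c = ∑ x, S a x * S b x * (starRingEnd ℂ) (S c x) / S one x)
    (mul : (A → ℂ) → (A → ℂ) → (A → ℂ))
    (hmul : ∀ u v c, mul u v c = ∑ a, ∑ b, u a * v b * N a b c)
    (p : A → (A → ℂ))
    (hp : ∀ a b, p a b = S one a * (starRingEnd ℂ) (S b a)) :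
    (∀ a b, mul (p a) (p b) = if a = b then p a else 0) ∧
      (∑ a, p a) = Pi.single one 1 := by
  have hrow : ∀ a b, ∑ x, S a x * (starRingEnd ℂ) (S b x) = if a = b then 1 else 0 := by
    intro a b
    have h := congrFun (congrFun (Matrix.mem_unitaryGroup_iff.mp hS) a) b
    simpa [Matrix.mul_apply, Matrix.one_apply, Matrix.star_apply] using h
  have hcol : ∀ a x, ∑ d, (starRingEnd ℂ) (S d a) * S d x = if a = x then 1 else 0 := by
    intro a x
    have h := congrFun (congrFun (Matrix.mem_unitaryGroup_iff'.mp hS) a) x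
    simpa [Matrix.mul_apply, Matrix.one_apply, Matrix.star_apply] using h
  constructor
  · intro a b
    funext c
    have key : mul (p a) (p b) c = ∑ x, (S one a * S one b * (starRingEnd ℂ) (S c x) / S one x) *
        ((∑ d, (starRingEnd ℂ) (S d a) * S d x) * (∑ e, (starRingEnd ℂ) (S e b) * S e x)) := by
      rw [hmul]
      simp only [hN, hp, Finset.sum_mul_sum]
      simp only [Finset.mul_sum]
      conv_rhs => rw [Finset.sum_comm]
      refine Finset.sum_congr rfl fun d _ => ?_
      conv_rhs => rw [Finset.sum_comm]
      refine Finset.sum_congr rfl fun e _ => ?_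
      refine Finset.sum_congr rfl fun x _ => ?_
      ring
    rw [key]
    simp only [hcol]
    by_cases hab : a = b
    · subst hab
      have := hone a
      simp [hp]
      field_simp
    · simp [hab]
  · funext b
    simp only [Finset.sum_apply, hp, hrow, Pi.single_apply, eq_comm]
end

section
/- Let V be a unitary n×n complex matrix and D a diagonal unitary n×n matrix such that V D Vᴴ is diagonal, where Vᴴ is the conjugate transpose. Then for every row index ℓ and all column indices k₁, k₂ with V_{ℓ,k₁} ≠ 0 and V_{ℓ,k₂} ≠ 0, one has D_{k₁,k₁} = D_{k₂,k₂}; moreover D_{k,k} = (V D Vᴴ)_{ℓ,ℓ} whenever V_{ℓ,k} ≠ 0. -/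
open scoped Matrix

/-- **Diagonal phases are constant on the support of each row.**
If `V` is unitary, `D` is a diagonal unitary matrix, and `V * D * Vᴴ` is again diagonal,
then for every row `ℓ` the diagonal entries `D k k` agree for all columns `k` where
`V ℓ k ≠ 0`, and they equal the corresponding diagonal entry of `V * D * Vᴴ`. -/
theorem diagonal_conjugation_constant_phases
    {n : ℕ}
    (V : Matrix (Fin n) (Fin n) ℂ) (hV : V ∈ Matrix.unitaryGroup (Fin n) ℂ)
    (D : Matrix (Fin n) (Fin n) ℂ) (hD : D ∈ Matrix.unitaryGroup (Fin n) ℂ)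
    (hDdiag : D.IsDiag)
    (hconj : (V * D * Vᴴ).IsDiag) :
    (∀ ℓ k₁ k₂ : Fin n, V ℓ k₁ ≠ 0 → V ℓ k₂ ≠ 0 → D k₁ k₁ = D k₂ k₂) ∧
      (∀ ℓ k : Fin n, V ℓ k ≠ 0 → D k k = (V * D * Vᴴ) ℓ ℓ) := by
  have key : ∀ ℓ k : Fin n, V ℓ k ≠ 0 → D k k = (V * D * Vᴴ) ℓ ℓ := by
    intro ℓ k hk
    have hVV : Vᴴ * V = 1 := Matrix.mem_unitaryGroup_iff'.mp hV
    have h1 : V * D = (V * D * Vᴴ) * V := by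
      rw [Matrix.mul_assoc (V * D), hVV, Matrix.mul_one]
    generalize V * D * Vᴴ = E at h1 hconj ⊢
    have h2 := congrFun (congrFun h1 ℓ) k
    rw [Matrix.mul_apply, Matrix.mul_apply, Finset.sum_eq_single k, Finset.sum_eq_single ℓ] at h2
    · rw [mul_comm] at h2
      exact mul_right_cancel₀ hk h2
    · intro b _ hb
      rw [hconj hb.symm, zero_mul]
    · simp
    · intro b _ hb
      rw [hDdiag hb, mul_zero]
    · simp
  exact ⟨fun ℓ k₁ k₂ h₁ h₂ => (key ℓ k₁ h₁).trans (key ℓ k₂ h₂).symm, key⟩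
end

section
/- Let n ≥ 2 and let U be a unitary n×n complex matrix that is not a scalar multiple of the identity (equivalently, U has at least two distinct eigenvalues). Then there exists a unitary n×n matrix V such that V U Vᴴ is not monomial, where Vᴴ is the conjugate transpose. -/
open scoped Matrix

/-- A square matrix is monomial if every row and every column contains exactly one
nonzero entry. -/
def Matrix.IsMonomial {n : Type*} [Fintype n] (M : Matrix n n ℂ) : Prop :=
  (∀ i, ∃! j, M i j ≠ 0) ∧ (∀ j, ∃! i, M i j ≠ 0)

open scoped ComplexConjugate

/-- The 2x2 special unitary with first row `(p, q)` embedded in the plane `(i, j)`. -/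
def planeRot {n : ℕ} (i j : Fin n) (p q : ℂ) : Matrix (Fin n) (Fin n) ℂ :=
  fun x => if x = i then Pi.single i p + Pi.single j q
    else if x = j then Pi.single i (-conj q) + Pi.single j (conj p) else Pi.single x 1

lemma planeRot_mul_i {n : ℕ} (i j : Fin n) (p q : ℂ) (M : Matrix (Fin n) (Fin n) ℂ) (y : Fin n) :
    (planeRot i j p q * M) i y = p * M i y + q * M j y := by
  simp [Matrix.mul_apply, planeRot, add_mul, Finset.sum_add_distrib, Pi.single_apply]

lemma planeRot_mul_j {n : ℕ} {i j : Fin n} (h : i ≠ j) (p q : ℂ)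
    (M : Matrix (Fin n) (Fin n) ℂ) (y : Fin n) :
    (planeRot i j p q * M) j y = -conj q * M i y + conj p * M j y := by
  simp [Matrix.mul_apply, planeRot, add_mul, Finset.sum_add_distrib, Pi.single_apply, h.symm]

lemma planeRot_mul_other {n : ℕ} {i j x : Fin n} (hi : x ≠ i) (hj : x ≠ j) (p q : ℂ)
    (M : Matrix (Fin n) (Fin n) ℂ) (y : Fin n) :
    (planeRot i j p q * M) x y = M x y := by
  simp [Matrix.mul_apply, planeRot, Pi.single_apply, hi, hj]

lemma planeRot_unitary {n : ℕ} {i j : Fin n} (h : i ≠ j) (p q : ℂ)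
    (hpq : p * conj p + q * conj q = 1) :
    planeRot i j p q ∈ Matrix.unitaryGroup (Fin n) ℂ := by
  rw [Matrix.mem_unitaryGroup_iff]
  ext x y
  have h' := h.symm
  by_cases hi : x = i
  · subst hi
    rw [planeRot_mul_i]
    by_cases hy : y = x
    · subst hy
      simp [planeRot, Matrix.star_apply, h, h', hpq]
    · by_cases hy2 : y = j
      · subst hy2
        simp [planeRot, Matrix.star_apply, h, h']
        ring
      · simp [planeRot, Matrix.star_apply, hy, hy2, Ne.symm hy, Ne.symm hy2]
  · by_cases hj : x = j
    · subst hj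
      rw [planeRot_mul_j h]
      by_cases hy : y = x
      · subst hy
        simp [planeRot, Matrix.star_apply, h, h']
        linear_combination hpq
      · by_cases hy2 : y = i
        · subst hy2
          simp [planeRot, Matrix.star_apply, h, h']
          ring
        · simp [planeRot, Matrix.star_apply, hy, hy2, Ne.symm hy, Ne.symm hy2]
    · rw [planeRot_mul_other hi hj]
      by_cases hy : y = i
      · subst hy
        simp [planeRot, Matrix.star_apply, hi, hj]
      · by_cases hy2 : y = j
        · subst hy2
          simp [planeRot, Matrix.star_apply, hi, hj, h']
        · simp [planeRot, Matrix.star_apply, Pi.single_apply, hy, hy2, Matrix.one_apply]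

lemma mul_planeRot_i {n : ℕ} (i j : Fin n) (p q : ℂ) (M : Matrix (Fin n) (Fin n) ℂ) (y : Fin n) :
    (M * (planeRot i j p q)ᴴ) y i = M y i * conj p + M y j * conj q := by
  have := congrArg conj (planeRot_mul_i i j p q Mᴴ y)
  rw [← Matrix.conjTranspose_conjTranspose M, ← Matrix.conjTranspose_mul,
    Matrix.conjTranspose_apply, ← starRingEnd_apply, this]
  simp [mul_comm]

lemma mul_planeRot_j {n : ℕ} {i j : Fin n} (h : i ≠ j) (p q : ℂ)
    (M : Matrix (Fin n) (Fin n) ℂ) (y : Fin n) :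
    (M * (planeRot i j p q)ᴴ) y j = - M y i * q + M y j * p := by
  have := congrArg conj (planeRot_mul_j h p q Mᴴ y)
  rw [← Matrix.conjTranspose_conjTranspose M, ← Matrix.conjTranspose_mul,
    Matrix.conjTranspose_apply, ← starRingEnd_apply, this]
  simp [mul_comm]

lemma Matrix.IsMonomial.row_zero {n : ℕ} {M : Matrix (Fin n) (Fin n) ℂ} (hM : M.IsMonomial)
    {i j k : Fin n} (h : j ≠ k) : M i j * M i k = 0 := by
  by_contra hc
  exact h ((hM.1 i).unique (left_ne_zero_of_mul hc) (right_ne_zero_of_mul hc))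

lemma Matrix.IsMonomial.col_zero {n : ℕ} {M : Matrix (Fin n) (Fin n) ℂ} (hM : M.IsMonomial)
    {i j k : Fin n} (h : j ≠ k) : M j i * M k i = 0 := by
  by_contra hc
  exact h ((hM.2 i).unique (left_ne_zero_of_mul hc) (right_ne_zero_of_mul hc))

/-- **Non-scalar unitaries can be conjugated out of the monomial matrices.**
If `n ≥ 2` and `U` is a unitary `n × n` matrix which is not a scalar multiple of the
identity, then there is a unitary `V` such that `V * U * Vᴴ` is not monomial. -/
theorem nonscalar_unitary_conjugate_not_monomial
    {n : ℕ} (hn : 2 ≤ n)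
    (U : Matrix (Fin n) (Fin n) ℂ) (hU : U ∈ Matrix.unitaryGroup (Fin n) ℂ)
    (hscalar : ¬ ∃ c : ℂ, U = c • (1 : Matrix (Fin n) (Fin n) ℂ)) :
    ∃ V ∈ Matrix.unitaryGroup (Fin n) ℂ, ¬ (V * U * Vᴴ).IsMonomial := by
  by_contra! H
  have hmon : U.IsMonomial := by simpa using H 1 (one_mem _)
  have c1 : conj (3/5 : ℂ) = 3/5 := by rw [map_div₀, map_ofNat, map_ofNat]
  have c2 : conj (4/5 : ℂ) = 4/5 := by rw [map_div₀, map_ofNat, map_ofNat]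
  have c3 : conj (4/5 * Complex.I : ℂ) = -(4/5 * Complex.I) := by rw [map_mul, c2, Complex.conj_I]; ring
  have key : ∀ i j : Fin n, i ≠ j → U i j = 0 := by
    intro i j hij
    by_contra hb
    have hi : U i i = 0 := (mul_eq_zero.1 (hmon.row_zero (i := i) hij)).resolve_right hb
    have hj : U j j = 0 := (mul_eq_zero.1 (hmon.col_zero (i := j) hij)).resolve_left hb
    have hR := H _ (planeRot_unitary hij (3/5) (4/5) (by rw [c1, c2]; norm_num))
    have hC := H _ (planeRot_unitary hij (3/5) (4/5 * Complex.I)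
      (by rw [c1, c3]; linear_combination (-16/25) * Complex.I_sq))
    have r1 := hR.row_zero (i := i) hij
    have r2 := hR.row_zero (i := j) hij
    have s1 := hC.row_zero (i := i) hij
    simp only [mul_planeRot_i, mul_planeRot_j hij, planeRot_mul_i, planeRot_mul_j hij,
      c1, c2, c3, hi, hj] at r1 r2 s1
    generalize U i j = b at *
    generalize U j i = a at *
    have t1 : (a + b) * (9 * b - 16 * a) = 0 := by linear_combination (625/12) * r1
    have t2 : (a + b) * (9 * a - 16 * b) = 0 := by linear_combination (-625/12) * r2
    have hab : a + b = 0 := by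
      by_contra hne
      have u1 := (mul_eq_zero.1 t1).resolve_left hne
      have u2 := (mul_eq_zero.1 t2).resolve_left hne
      exact hb (by linear_combination (-9/175) * u1 + (-16/175) * u2)
    have ha : a = -b := by linear_combination hab
    subst ha
    ring_nf at s1
    simp [Complex.I_sq, Complex.I_pow_three] at s1
    ring_nf at s1
    simp [hb] at s1
  apply hscalar
  refine ⟨U ⟨0, by omega⟩ ⟨0, by omega⟩, ?_⟩
  ext j k
  by_cases hjk : j = k
  swap
  · simp [hjk, key j k hjk]
  subst hjk
  simp only [Matrix.smul_apply, Matrix.one_apply_eq, smul_eq_mul, mul_one]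
  generalize (⟨0, by omega⟩ : Fin n) = i
  by_contra hne
  have hij : i ≠ j := by rintro rfl; exact hne rfl
  have hR := H _ (planeRot_unitary hij (3/5) (4/5) (by rw [c1, c2]; norm_num))
  have r1 := hR.row_zero (i := i) hij
  have r2 := hR.row_zero (i := j) hij
  simp only [mul_planeRot_i, mul_planeRot_j hij, planeRot_mul_i, planeRot_mul_j hij,
    c1, c2, key i j hij, key j i hij.symm] at r1 r2
  generalize U i i = a at *
  generalize U j j = b at *
  have hd : b - a ≠ 0 := sub_ne_zero.2 hne
  have t1 : (b - a) * (9 * a + 16 * b) = 0 := by linear_combination (625/12) * r1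
  have t2 : (b - a) * (16 * a + 9 * b) = 0 := by linear_combination (625/12) * r2
  have u1 := (mul_eq_zero.1 t1).resolve_left hd
  have u2 := (mul_eq_zero.1 t2).resolve_left hd
  exact hd (by linear_combination (1/7) * (u1 - u2))
end

section
/- Let V₁, …, V_M be unitary n×n complex matrices. Define Δ = {U unitary n×n : U is monomial and V_k U V_k⁻¹ is monomial for every k = 1,…,M} and T = {D unitary n×n : D is diagonal and V_k D V_k⁻¹ is diagonal for every k = 1,…,M}. Then Δ is a subgroup of the unitary group, T is a subgroup of Δ, and T has finite index in Δ (the set of left cosets Δ/T is finite). -/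
open scoped Matrix

theorem isMonomial_iff_perm {n : ℕ} (A : Matrix (Fin n) (Fin n) ℂ) :
    A.IsMonomial ↔ ∃ σ : Equiv.Perm (Fin n), ∀ i j, A i j ≠ 0 ↔ j = σ i := by
  constructor
  · rintro ⟨h1, h2⟩
    choose f hf hf' using h1
    choose g hg hg' using h2
    refine ⟨⟨f, g, fun i => ?_, fun j => ?_⟩, fun i j => ⟨fun h => hf' i j h, ?_⟩⟩
    · exact (hg' (f i) i (hf i)).symm
    · exact (hf' (g j) j (hg j)).symm
    · rintro rfl
      exact hf i
  · rintro ⟨σ, h⟩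
    refine ⟨fun i => ⟨σ i, (h i _).2 rfl, fun j hj => (h i j).1 hj⟩,
      fun j => ⟨σ.symm j, (h _ j).2 (by simp), fun i hi => ?_⟩⟩
    rw [(h i j).1 hi]
    simp

theorem unitary_inv_apply {n : ℕ} (U : Matrix.unitaryGroup (Fin n) ℂ) (i j : Fin n) :
    ((U⁻¹ : Matrix.unitaryGroup (Fin n) ℂ) : Matrix (Fin n) (Fin n) ℂ) i j
      = star ((U : Matrix (Fin n) (Fin n) ℂ) j i) := rfl

def monoSubgroup (n : ℕ) : Subgroup (Matrix.unitaryGroup (Fin n) ℂ) where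
  carrier := {U | (U : Matrix (Fin n) (Fin n) ℂ).IsMonomial}
  one_mem' := by
    refine (isMonomial_iff_perm _).2 ⟨1, fun i j => ?_⟩
    simp [Matrix.one_apply, eq_comm]
  mul_mem' := by
    intro A B hA hB
    obtain ⟨σ, hσ⟩ := (isMonomial_iff_perm _).1 hA
    obtain ⟨τ, hτ⟩ := (isMonomial_iff_perm _).1 hB
    refine (isMonomial_iff_perm _).2 ⟨σ.trans τ, fun i j => ?_⟩
    have : ((A * B : Matrix.unitaryGroup (Fin n) ℂ) : Matrix (Fin n) (Fin n) ℂ) i j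
        = A.1 i (σ i) * B.1 (σ i) j := by
      change (A.1 * B.1) i j = _
      rw [Matrix.mul_apply]
      refine Finset.sum_eq_single _ (fun k _ hk => ?_) (by simp)
      rw [not_not.1 (mt (hσ i k).1 hk), zero_mul]
    rw [this, mul_ne_zero_iff]
    exact ⟨fun h => (hτ _ _).1 h.2, fun h => ⟨(hσ _ _).2 rfl, (hτ _ _).2 h⟩⟩
  inv_mem' := by
    intro A hA
    obtain ⟨σ, hσ⟩ := (isMonomial_iff_perm _).1 hA
    refine (isMonomial_iff_perm _).2 ⟨σ.symm, fun i j => ?_⟩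
    rw [unitary_inv_apply, star_ne_zero, hσ, Equiv.eq_symm_apply, eq_comm]

def diagSubgroup (n : ℕ) : Subgroup (Matrix.unitaryGroup (Fin n) ℂ) where
  carrier := {U | (U : Matrix (Fin n) (Fin n) ℂ).IsDiag}
  one_mem' := Matrix.isDiag_one
  mul_mem' := by
    intro A B hA hB i j hij
    change (A.1 * B.1) i j = _
    rw [Matrix.mul_apply]
    refine Finset.sum_eq_zero fun k _ => ?_
    by_cases h : i = k
    · subst h
      rw [hB hij, mul_zero]
    · rw [hA h, zero_mul]
  inv_mem' := by
    intro A hA i j hij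
    rw [unitary_inv_apply, hA hij.symm, star_zero]

theorem diag_le_mono (n : ℕ) : diagSubgroup n ≤ monoSubgroup n := by
  intro D hD
  refine (isMonomial_iff_perm _).2 ⟨1, fun i j => ⟨fun h => ?_, ?_⟩⟩
  · by_contra hne
    exact h (hD (fun e => hne (by simp [e])))
  · intro e h
    rw [show j = i from e] at h
    have h1 : (D.1 * star D.1) i i = 1 := by
      rw [Matrix.mem_unitaryGroup_iff.1 D.2, Matrix.one_apply_eq]
    rw [Matrix.mul_apply, Finset.sum_eq_zero] at h1
    · exact zero_ne_one h1
    · intro k _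
      by_cases e : i = k
      · rw [← e]
        rw [show D.1 i i = 0 from h, zero_mul]
      · rw [hD e, zero_mul]

theorem diag_of_same_support {n : ℕ} (U W : Matrix.unitaryGroup (Fin n) ℂ)
    (hU : U ∈ monoSubgroup n) (h : ∀ i j, U.1 i j ≠ 0 ↔ W.1 i j ≠ 0) :
    U⁻¹ * W ∈ diagSubgroup n := by
  intro i j hij
  change ((U⁻¹).1 * W.1) i j = _
  rw [Matrix.mul_apply]
  refine Finset.sum_eq_zero fun k _ => ?_
  by_contra hne
  rw [mul_eq_zero, not_or, unitary_inv_apply, star_eq_zero] at hne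
  exact hij ((hU.1 k).unique hne.1 ((h _ _).2 hne.2))

/-- **Finiteness of the group of protected gates up to equivalence.**
Given unitaries `V₁, …, V_M`, the set `Δ` of monomial unitaries remaining monomial
under conjugation by every `V_k` is a subgroup of the unitary group, the set `T` of
diagonal unitaries remaining diagonal under conjugation by every `V_k` is a subgroup
of `Δ`, and `T` has finite index in `Δ`. -/
theorem protected_gates_finite_up_to_diagonal
    (n M : ℕ) (V : Fin M → Matrix.unitaryGroup (Fin n) ℂ) :
    ∃ HΔ HT : Subgroup (Matrix.unitaryGroup (Fin n) ℂ),
      (∀ U : Matrix.unitaryGroup (Fin n) ℂ,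
        U ∈ HΔ ↔ ((U : Matrix (Fin n) (Fin n) ℂ).IsMonomial ∧
          ∀ k : Fin M,
            ((V k : Matrix (Fin n) (Fin n) ℂ) * (U : Matrix (Fin n) (Fin n) ℂ) *
              (((V k)⁻¹ : Matrix.unitaryGroup (Fin n) ℂ) :
                Matrix (Fin n) (Fin n) ℂ)).IsMonomial)) ∧
      (∀ D : Matrix.unitaryGroup (Fin n) ℂ,
        D ∈ HT ↔ ((D : Matrix (Fin n) (Fin n) ℂ).IsDiag ∧
          ∀ k : Fin M,
            ((V k : Matrix (Fin n) (Fin n) ℂ) * (D : Matrix (Fin n) (Fin n) ℂ) *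
              (((V k)⁻¹ : Matrix.unitaryGroup (Fin n) ℂ) :
                Matrix (Fin n) (Fin n) ℂ)).IsDiag)) ∧
      HT ≤ HΔ ∧ (HT.subgroupOf HΔ).FiniteIndex := by
  refine ⟨monoSubgroup n ⊓ ⨅ k, (monoSubgroup n).comap (MulAut.conj (V k)).toMonoidHom,
    diagSubgroup n ⊓ ⨅ k, (diagSubgroup n).comap (MulAut.conj (V k)).toMonoidHom,
    fun U => ?_, fun D => ?_, ?_, ?_⟩
  · simp only [Subgroup.mem_inf, Subgroup.mem_iInf, Subgroup.mem_comap]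
    rfl
  · simp only [Subgroup.mem_inf, Subgroup.mem_iInf, Subgroup.mem_comap]
    rfl
  · exact inf_le_inf (diag_le_mono n) (iInf_mono fun k => Subgroup.comap_mono (diag_le_mono n))
  · set HΔ := monoSubgroup n ⊓ ⨅ k, (monoSubgroup n).comap (MulAut.conj (V k)).toMonoidHom
      with hHΔ
    set HT := diagSubgroup n ⊓ ⨅ k, (diagSubgroup n).comap (MulAut.conj (V k)).toMonoidHom
      with hHT
    let f : HΔ → (Fin n → Fin n → Prop) × (Fin M → Fin n → Fin n → Prop) := fun U =>
      (fun i j => U.1.1 i j ≠ 0, fun k i j => (MulAut.conj (V k) U.1).1 i j ≠ 0)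
    have hf : ∀ U W : HΔ, f U = f W → U⁻¹ * W ∈ HT.subgroupOf HΔ := by
      intro U W h
      have hU := U.2
      simp only [hHΔ, Subgroup.mem_inf, Subgroup.mem_iInf, Subgroup.mem_comap] at hU
      rw [Subgroup.mem_subgroupOf]
      simp only [hHT, Subgroup.mem_inf, Subgroup.mem_iInf, Subgroup.mem_comap]
      refine ⟨diag_of_same_support U.1 W.1 hU.1 fun i j => ?_, fun k => ?_⟩
      · exact iff_of_eq (congrFun (congrFun (congrArg Prod.fst h) i) j)
      · have := diag_of_same_support (MulAut.conj (V k) U.1) (MulAut.conj (V k) W.1) (hU.2 k)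
          fun i j => iff_of_eq (congrFun (congrFun (congrFun (congrArg Prod.snd h) k) i) j)
        rw [← map_inv, ← map_mul] at this
        exact this
    have hinj : Function.Injective
        (fun q : HΔ ⧸ HT.subgroupOf HΔ => f (Quotient.out q)) := by
      intro p q h
      have := QuotientGroup.eq.2 (hf _ _ h)
      rwa [QuotientGroup.out_eq', QuotientGroup.out_eq'] at this
    have : Finite (HΔ ⧸ HT.subgroupOf HΔ) := Finite.of_injective _ hinj
    exact Subgroup.finiteIndex_of_finite_quotient
end

section
/- Let φ = (1+√5)/2 and let S be the 2×2 real matrix S = (1/√(φ+2))·[[1, φ], [φ, −1]]. Then the set of monomial unitary 2×2 complex matrices U such that S U S⁻¹ is monomial equals {λ·I : λ ∈ ℂ, |λ| = 1} ∪ {λ·[[0, 1], [−1, 0]] : λ ∈ ℂ, |λ| = 1}. -/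
open scoped Matrix

theorem Matrix.isMonomial_two (M : Matrix (Fin 2) (Fin 2) ℂ) : M.IsMonomial ↔
    (M 0 0 ≠ 0 ∧ M 1 1 ≠ 0 ∧ M 0 1 = 0 ∧ M 1 0 = 0) ∨
    (M 0 0 = 0 ∧ M 1 1 = 0 ∧ M 0 1 ≠ 0 ∧ M 1 0 ≠ 0) := by
  unfold Matrix.IsMonomial ExistsUnique
  simp only [Fin.forall_fin_two, Fin.exists_fin_two]
  by_cases h1 : M 0 0 = 0 <;> by_cases h2 : M 0 1 = 0 <;> by_cases h3 : M 1 0 = 0 <;>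
    by_cases h4 : M 1 1 = 0 <;> simp [h1, h2, h3, h4]

theorem conj_formula (φ : ℝ) (h0 : 0 < φ) (h : φ ^ 2 = φ + 1) (U : Matrix (Fin 2) (Fin 2) ℂ)
    (S : Matrix (Fin 2) (Fin 2) ℂ)
    (hS : S = ((Real.sqrt (φ + 2) : ℂ))⁻¹ • !![1, (φ : ℂ); (φ : ℂ), -1]) :
    S * U * S⁻¹ = ((φ + 2 : ℝ) : ℂ)⁻¹ • (!![1, (φ : ℂ); (φ : ℂ), -1] * U *
      !![1, (φ : ℂ); (φ : ℂ), -1]) := by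
  have hs : ((Real.sqrt (φ + 2) : ℂ))⁻¹ * ((Real.sqrt (φ + 2) : ℂ))⁻¹
      = ((φ + 2 : ℝ) : ℂ)⁻¹ := by
    rw [← mul_inv, ← Complex.ofReal_mul, Real.mul_self_sqrt (by linarith)]
  have hne : ((φ + 2 : ℝ) : ℂ) ≠ 0 := by
    exact_mod_cast (by linarith : φ + 2 ≠ 0)
  have hc : (φ : ℂ) ^ 2 = φ + 1 := by exact_mod_cast h
  have hSS : S * S = 1 := by
    rw [hS, Matrix.smul_mul, Matrix.mul_smul, smul_smul, hs]
    have : (!![1, (φ : ℂ); (φ : ℂ), -1] * !![1, (φ : ℂ); (φ : ℂ), -1])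
        = ((φ + 2 : ℝ) : ℂ) • (1 : Matrix (Fin 2) (Fin 2) ℂ) := by
      ext i j
      fin_cases i <;> fin_cases j <;> simp [Matrix.mul_apply, Fin.sum_univ_two] <;>
        linear_combination hc
    rw [this, smul_smul, inv_mul_cancel₀ hne, one_smul]
  rw [Matrix.inv_eq_right_inv hSS, hS]
  simp only [Matrix.smul_mul, Matrix.mul_smul, smul_smul, hs]

/-- **The intertwiners of the Fibonacci `S`-matrix.**
With `φ = (1+√5)/2` and `S = (1/√(φ+2)) [[1, φ], [φ, −1]]`, the monomial unitary `2 × 2`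
matrices `U` such that `S U S⁻¹` is monomial are exactly the unimodular multiples of the
identity and of `[[0, 1], [−1, 0]]`. -/
theorem fibonacci_S_intertwiners :
    ∀ (φ : ℝ), φ = (1 + Real.sqrt 5) / 2 →
    ∀ S : Matrix (Fin 2) (Fin 2) ℂ,
      S = ((Real.sqrt (φ + 2) : ℂ))⁻¹ • !![1, (φ : ℂ); (φ : ℂ), -1] →
    {U : Matrix (Fin 2) (Fin 2) ℂ |
        U ∈ Matrix.unitaryGroup (Fin 2) ℂ ∧ U.IsMonomial ∧ (S * U * S⁻¹).IsMonomial} =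
      {U : Matrix (Fin 2) (Fin 2) ℂ | ∃ lam : ℂ, ‖lam‖ = 1 ∧
        (U = lam • (1 : Matrix (Fin 2) (Fin 2) ℂ) ∨ U = lam • !![0, 1; -1, 0])} := by
  intro φ hφ S hS
  have h5 : Real.sqrt 5 ^ 2 = 5 := Real.sq_sqrt (by norm_num)
  have h5' : 0 ≤ Real.sqrt 5 := Real.sqrt_nonneg 5
  have h0 : 0 < φ := by rw [hφ]; linarith
  have h : φ ^ 2 = φ + 1 := by rw [hφ]; linear_combination h5 / 4
  have hne : ((φ + 2 : ℝ) : ℂ)⁻¹ ≠ 0 := by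
    apply inv_ne_zero
    exact_mod_cast (by linarith : φ + 2 ≠ 0)
  have hc : (φ : ℂ) ^ 2 = φ + 1 := by exact_mod_cast h
  have hφ0 : (φ : ℂ) ≠ 0 := by exact_mod_cast h0.ne'
  have hφ2 : (φ : ℂ) + 2 ≠ 0 := by exact_mod_cast (by linarith : φ + 2 ≠ 0)
  have hφ1 : (φ : ℂ) ^ 2 * φ ^ 2 - 1 ≠ 0 := by
    have : φ ^ 2 * φ ^ 2 - 1 ≠ 0 := by rw [h]; nlinarith
    exact_mod_cast this
  ext U
  simp only [Set.mem_ofPred_eq]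
  rw [conj_formula φ h0 h U S hS, Matrix.isMonomial_two, Matrix.isMonomial_two]
  simp only [Matrix.smul_apply, smul_eq_mul, mul_eq_zero, ne_eq, hne, false_or]
  simp only [Matrix.mul_apply, Fin.sum_univ_two, Matrix.of_apply, Matrix.cons_val', Matrix.cons_val_zero,
    Matrix.cons_val_one, Matrix.cons_val_fin_one]
  constructor
  · rintro ⟨hU, hm, hm'⟩
    have hu := congrFun (congrFun (Matrix.mem_unitaryGroup_iff.mp hU) 0) 0
    simp only [Matrix.mul_apply, Fin.sum_univ_two, Matrix.star_apply, Matrix.one_apply_eq,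
      RCLike.star_def, Complex.mul_conj] at hu
    rcases hm with ⟨ha, hb, h1, h2⟩ | ⟨h1, h2, ha, hb⟩
    · have key : U 0 0 = U 1 1 := by
        rcases hm' with ⟨_, _, h3, _⟩ | ⟨h3, h4, _, _⟩
        · rw [h1, h2] at h3
          apply mul_left_cancel₀ hφ0
          linear_combination h3
        · exfalso
          rw [h1, h2] at h3 h4
          exact (mul_ne_zero hφ1 ha) (by linear_combination (φ : ℂ) ^ 2 * h4 - h3)
      refine ⟨U 0 0, ?_, Or.inl ?_⟩
      · rw [h1] at hu
        simp only [map_zero, Complex.ofReal_zero, add_zero, Complex.normSq_eq_norm_sq] at hu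
        have hu' : ‖U 0 0‖ ^ 2 = 1 := by exact_mod_cast hu
        exact (pow_eq_one_iff_of_nonneg (norm_nonneg (U 0 0)) two_ne_zero).mp hu'
      · ext i j
        fin_cases i <;> fin_cases j <;> simp [h1, h2, key]
    · have key : U 1 0 = - U 0 1 := by
        rcases hm' with ⟨_, _, h3, h4⟩ | ⟨h3, _, _, _⟩
        · exfalso
          rw [h1, h2] at h3 h4
          exact (mul_ne_zero hφ1 ha) (by linear_combination (φ : ℂ) ^ 2 * h4 + h3)
        · rw [h1, h2] at h3
          apply mul_left_cancel₀ hφ0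
          linear_combination h3
      refine ⟨U 0 1, ?_, Or.inr ?_⟩
      · rw [h1] at hu
        simp only [map_zero, Complex.ofReal_zero, zero_add, Complex.normSq_eq_norm_sq] at hu
        have hu' : ‖U 0 1‖ ^ 2 = 1 := by exact_mod_cast hu
        exact (pow_eq_one_iff_of_nonneg (norm_nonneg (U 0 1)) two_ne_zero).mp hu'
      · ext i j
        fin_cases i <;> fin_cases j <;> simp [h1, h2, key]
  · rintro ⟨l, hl, hU⟩
    have hl0 : l ≠ 0 := by
      rintro rfl
      simp at hl
    have hll : l * (starRingEnd ℂ) l = 1 := by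
      rw [Complex.mul_conj, Complex.normSq_eq_norm_sq, hl]; simp
    have hp : l * ((φ : ℂ) + 2) ≠ 0 := mul_ne_zero hl0 hφ2
    rcases hU with rfl | rfl
    · refine ⟨?_, Or.inl ?_, Or.inl ?_⟩
      · rw [Matrix.mem_unitaryGroup_iff]
        ext i j
        fin_cases i <;> fin_cases j <;> simp [Matrix.mul_apply, hll]
      · simp [hl0]
      · simp only [Matrix.smul_apply, smul_eq_mul, Matrix.one_apply]
        refine ⟨fun e => hp ?_, fun e => hp ?_, ?_, ?_⟩
        · simp at e; linear_combination e - l * hc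
        · simp at e; linear_combination e - l * hc
        · simp; try ring
        · simp; try ring
    · refine ⟨?_, Or.inr ?_, Or.inr ?_⟩
      · rw [Matrix.mem_unitaryGroup_iff]
        ext i j
        fin_cases i <;> fin_cases j <;> simp [Matrix.mul_apply, Fin.sum_univ_two, hll]
      · simp [hl0]
      · refine ⟨?_, ?_, fun e => hp ?_, fun e => hp ?_⟩
        · simp; try ring
        · simp; try ring
        · simp at e; linear_combination -e - l * hc
        · simp at e; linear_combination e - l * hc
end

section
/- Let φ = (1+√5)/2, let S = (1/√(φ+2))·[[1, φ], [φ, −1]], and let T = diag(1, e^{4πi/5}). Then the set of monomial unitary 2×2 complex matrices U such that (S T) U (S T)⁻¹ is monomial equals {λ·I : λ ∈ ℂ, |λ| = 1} ∪ {λ·[[0, e^{3πi/5}], [1, 0]] : λ ∈ ℂ, |λ| = 1}. -/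
open scoped Matrix

theorem isMonomial_two_iff (a b c d : ℂ) : (!![a, b; c, d] : Matrix (Fin 2) (Fin 2) ℂ).IsMonomial ↔
    (a ≠ 0 ∧ d ≠ 0 ∧ b = 0 ∧ c = 0) ∨ (a = 0 ∧ d = 0 ∧ b ≠ 0 ∧ c ≠ 0) := by
  simp only [Matrix.IsMonomial, ExistsUnique, Fin.forall_fin_two, Fin.exists_fin_two]
  simp
  tauto

theorem conj_entries (φ s w v a b c d : ℂ) :
    ((s • !![1, φ; φ, -1] : Matrix (Fin 2) (Fin 2) ℂ) * !![1, 0; 0, w]) * !![a, b; c, d] *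
      (!![1, 0; 0, v] * (s • !![1, φ; φ, -1])) =
    !![s^2 * (a + φ * (b * v + w * c) + φ^2 * (w * v * d)),
       s^2 * (φ * a - b * v + φ^2 * (w * c) - φ * (w * v * d));
       s^2 * (φ * a + φ^2 * (b * v) - w * c - φ * (w * v * d)),
       s^2 * (φ^2 * a - φ * (b * v + w * c) + w * v * d)] := by
  ext i j
  fin_cases i <;> fin_cases j <;> simp [Matrix.mul_apply, Fin.sum_univ_two] <;> ring

theorem fib_conj_inv (φ s w v : ℂ) (hs : s^2 * (φ^2 + 1) = 1) (hw : w * v = 1) :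
    ((s • !![1, φ; φ, -1] : Matrix (Fin 2) (Fin 2) ℂ) * !![1, 0; 0, w])⁻¹ =
      (!![1, 0; 0, v] * (s • !![1, φ; φ, -1])) := by
  apply Matrix.inv_eq_right_inv
  have h := conj_entries φ s w v 1 0 0 1
  rw [← Matrix.one_fin_two, mul_one] at h
  rw [h, Matrix.one_fin_two]
  ext i j
  fin_cases i <;> fin_cases j <;> simp [hw] <;> linear_combination hs

theorem unitary_two_iff (a b c d : ℂ) : (!![a, b; c, d] : Matrix (Fin 2) (Fin 2) ℂ) ∈
    Matrix.unitaryGroup (Fin 2) ℂ ↔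
    (a * star a + b * star b = 1 ∧ a * star c + b * star d = 0) ∧
    (c * star a + d * star b = 0 ∧ c * star c + d * star d = 1) := by
  rw [Matrix.mem_unitaryGroup_iff, ← Matrix.ext_iff]
  simp [Fin.forall_fin_two, Matrix.mul_apply, Fin.sum_univ_two]

theorem mul_star_iff (z : ℂ) : z * star z = 1 ↔ ‖z‖ = 1 := by
  have h : z * star z = ((‖z‖^2 : ℝ) : ℂ) := by
    rw [← Complex.normSq_eq_norm_sq]; exact Complex.mul_conj z
  rw [h]
  norm_cast
  constructor
  · intro h
    nlinarith [norm_nonneg z]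
  · intro h; rw [h]; norm_num

/-- **The intertwiners of the Fibonacci `ST`-move.**
With `φ = (1+√5)/2`, `S = (1/√(φ+2)) [[1, φ], [φ, −1]]` and `T = diag(1, e^{4πi/5})`,
the monomial unitary `2 × 2` matrices `U` such that `(S T) U (S T)⁻¹` is monomial are
exactly the unimodular multiples of the identity and of `[[0, e^{3πi/5}], [1, 0]]`. -/
theorem fibonacci_ST_intertwiners :
    ∀ (φ : ℝ), φ = (1 + Real.sqrt 5) / 2 →
    ∀ S : Matrix (Fin 2) (Fin 2) ℂ,
      S = ((Real.sqrt (φ + 2) : ℂ))⁻¹ • !![1, (φ : ℂ); (φ : ℂ), -1] →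
    ∀ T : Matrix (Fin 2) (Fin 2) ℂ,
      T = !![1, 0; 0, Complex.exp (4 * Real.pi * Complex.I / 5)] →
    {U : Matrix (Fin 2) (Fin 2) ℂ |
        U ∈ Matrix.unitaryGroup (Fin 2) ℂ ∧ U.IsMonomial ∧
          ((S * T) * U * (S * T)⁻¹).IsMonomial} =
      {U : Matrix (Fin 2) (Fin 2) ℂ | ∃ lam : ℂ, ‖lam‖ = 1 ∧
        (U = lam • (1 : Matrix (Fin 2) (Fin 2) ℂ) ∨
          U = lam • !![0, Complex.exp (3 * Real.pi * Complex.I / 5); 1, 0])} := by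
  rintro φ hφ S rfl T rfl
  have h5 : Real.sqrt 5 ^ 2 = 5 := Real.sq_sqrt (by norm_num)
  have h50 : 0 < Real.sqrt 5 := Real.sqrt_pos.2 (by norm_num)
  have hφ0 : 1 / 2 < φ := by rw [hφ]; linarith
  have hφ2 : φ^2 = φ + 1 := by rw [hφ]; linear_combination h5 / 4
  have hsR : (Real.sqrt (φ + 2))^2 = φ + 2 := Real.sq_sqrt (by linarith)
  have hsR0 : Real.sqrt (φ + 2) ≠ 0 := (Real.sqrt_pos.2 (by linarith)).ne'
  have hs : ((Real.sqrt (φ + 2) : ℂ))⁻¹^2 * ((φ:ℂ)^2 + 1) = 1 := by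
    have : ((Real.sqrt (φ + 2)))⁻¹^2 * (φ^2 + 1) = 1 := by
      rw [inv_pow, hsR, hφ2]; field_simp [show φ + 2 ≠ 0 by linarith]; ring
    exact_mod_cast this
  have hφC0 : (φ:ℂ) ≠ 0 := by exact_mod_cast (by linarith : φ ≠ 0)
  have hφC1 : (φ:ℂ)^2 + 1 ≠ 0 := by
    exact_mod_cast (by positivity : φ^2 + 1 ≠ 0)
  have hφC2 : (φ:ℂ)^2 - 1 ≠ 0 := by
    have : φ^2 - 1 ≠ 0 := by rw [hφ2]; linarith
    exact_mod_cast this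
  generalize hsdef : ((Real.sqrt (φ + 2) : ℂ))⁻¹ = s at *
  have hs0 : s ≠ 0 := by rintro rfl; simp at hs
  generalize hw : Complex.exp (4 * Real.pi * Complex.I / 5) = w
  generalize he : Complex.exp (3 * Real.pi * Complex.I / 5) = e
  have hw0 : w ≠ 0 := by rw [← hw]; exact Complex.exp_ne_zero _
  have he0 : e ≠ 0 := by rw [← he]; exact Complex.exp_ne_zero _
  have hew : e = - w^2 := by
    have h1 : e * Complex.exp (Real.pi * Complex.I) = w^2 := by
      rw [← he, ← hw, ← Complex.exp_add, ← Complex.exp_nat_mul]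
      congr 1
      push_cast
      ring
    rw [Complex.exp_pi_mul_I] at h1
    linear_combination -h1
  have hen : ‖e‖ = 1 := by
    rw [← he, show (3 * Real.pi * Complex.I / 5 : ℂ) = ((3 * Real.pi / 5 : ℝ) : ℂ) * Complex.I by
      push_cast; ring]
    exact Complex.norm_exp_ofReal_mul_I _
  have hwv : w * w⁻¹ = 1 := mul_inv_cancel₀ hw0
  rw [fib_conj_inv _ _ _ _ hs hwv]
  generalize w⁻¹ = v at *
  ext U
  simp only [Set.mem_setOf_eq]
  rw [Matrix.eta_fin_two U]
  generalize U 0 0 = a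
  generalize U 0 1 = b
  generalize U 1 0 = c
  generalize U 1 1 = d
  rw [conj_entries, isMonomial_two_iff, isMonomial_two_iff, unitary_two_iff]
  constructor
  · rintro ⟨⟨⟨u1, u2⟩, u3, u4⟩, ⟨ha, hd, rfl, rfl⟩ | ⟨rfl, rfl, hb, hc⟩, hM⟩
    · simp only [mul_eq_zero, pow_eq_zero_iff, hs0, ne_eq, OfNat.ofNat_ne_zero, not_false_eq_true,
        false_or, not_or] at hM
      have had : a = d := by
        rcases hM with ⟨_, _, h, _⟩ | ⟨h1, h2, _⟩
        · apply mul_left_cancel₀ hφC0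
          linear_combination h + φ * d * hwv
        · exfalso
          have h3 : ((φ:ℂ)^2 + 1) * (((φ:ℂ)^2 - 1) * a) = 0 := by
            linear_combination φ^2 * h2 - h1
          simp [hφC1, hφC2, ha] at h3
      subst had
      refine ⟨a, (mul_star_iff a).1 (by simpa using u1), Or.inl ?_⟩
      rw [Matrix.one_fin_two]; simp
    · simp only [mul_eq_zero, pow_eq_zero_iff, hs0, ne_eq, OfNat.ofNat_ne_zero, not_false_eq_true,
        false_or, not_or] at hM
      have hbc : b = c * e := by
        rcases hM with ⟨_, _, h1, h2⟩ | ⟨h, _⟩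
        · exfalso
          have h3 : ((φ:ℂ)^2 + 1) * (((φ:ℂ)^2 - 1) * (w * c)) = 0 := by
            linear_combination φ^2 * h1 + h2
          simp [hφC1, hφC2, hw0, hc] at h3
        · have h' : b * v + w * c = 0 := by
            apply mul_left_cancel₀ hφC0
            linear_combination h
          rw [hew]
          linear_combination w * h' - b * hwv
      subst hbc
      refine ⟨c, (mul_star_iff c).1 (by simpa using u4), Or.inr ?_⟩
      simp
  · rintro ⟨l, hl, h | h⟩
    · have hl0 : l ≠ 0 := by rintro rfl; simp at hl
      have hl' := (mul_star_iff l).2 hl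
      have h' := Matrix.ext_iff.2 h
      simp [Fin.forall_fin_two] at h'
      obtain ⟨⟨rfl, rfl⟩, rfl, h4⟩ := h'
      subst h4
      refine ⟨by simpa using hl', by simp [hl0], Or.inl ⟨?_, ?_, ?_, ?_⟩⟩
      · rw [show s ^ 2 * (d + φ * (0 * v + w * 0) + φ ^ 2 * (w * v * d)) = d by
          rw [hwv]; linear_combination d * hs]
        exact hl0
      · rw [show s ^ 2 * (φ ^ 2 * d - φ * (0 * v + w * 0) + w * v * d) = d by
          rw [hwv]; linear_combination d * hs]
        exact hl0
      · rw [hwv]; ring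
      · rw [hwv]; ring
    · have hl0 : l ≠ 0 := by rintro rfl; simp at hl
      have hl' := (mul_star_iff l).2 hl
      have he' := (mul_star_iff e).2 hen
      have h' := Matrix.ext_iff.2 h
      simp [Fin.forall_fin_two] at h'
      obtain ⟨⟨rfl, rfl⟩, h3, rfl⟩ := h'
      subst h3
      have hev : c * e * v = - (w * c) := by
        rw [hew]; linear_combination - w * c * hwv
      refine ⟨⟨⟨?_, by simp⟩, by simp, by simpa using hl'⟩, by simp [hl0, he0],
        Or.inr ⟨?_, ?_, ?_, ?_⟩⟩
      · rw [star_mul]; linear_combination e * star e * hl' + he'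
      · rw [hev]; ring
      · rw [hev]; ring
      · rw [show s ^ 2 * (φ * 0 - c * e * v + φ ^ 2 * (w * c) - φ * (w * v * 0)) = w * c by
          rw [hev]; linear_combination w * c * hs]
        exact mul_ne_zero hw0 hl0
      · rw [show s ^ 2 * (φ * 0 + φ ^ 2 * (c * e * v) - w * c - φ * (w * v * 0)) = - (w * c) by
          rw [hev]; linear_combination - w * c * hs]
        exact neg_ne_zero.2 (mul_ne_zero hw0 hl0)
end

section
/- Let φ = (1+√5)/2, let S = (1/√(φ+2))·[[1, φ], [φ, −1]], and let T = diag(1, e^{4πi/5}). If U is a monomial unitary 2×2 complex matrix such that both S U S⁻¹ and (S T) U (S T)⁻¹ are monomial, then U = λ·I for some λ ∈ ℂ with |λ| = 1. In other words, Δ_s ∩ Δ_{st} = {λ·I : |λ| = 1}. -/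
open scoped Matrix

theorem mono_two {M : Matrix (Fin 2) (Fin 2) ℂ} (h : M.IsMonomial) :
    (M 0 1 = 0 ∧ M 1 0 = 0 ∧ M 0 0 ≠ 0 ∧ M 1 1 ≠ 0) ∨
    (M 0 0 = 0 ∧ M 1 1 = 0 ∧ M 0 1 ≠ 0 ∧ M 1 0 ≠ 0) := by
  obtain ⟨hr, hc⟩ := h
  simp only [ExistsUnique, Fin.exists_fin_two, Fin.forall_fin_two] at hr hc
  simp at hr hc
  tauto

theorem key_two {M U : Matrix (Fin 2) (Fin 2) ℂ} (p t : ℂ) (hp : p ≠ 0) (ht : t ≠ 0)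
    (hp4 : p ^ 4 ≠ 1) (hM : M.IsMonomial) (hU : U.IsMonomial)
    (h : M * !![1, p * t; p, -t] = !![1, p * t; p, -t] * U) :
    (U 0 1 = 0 ∧ U 1 0 = 0 ∧ U 0 0 = U 1 1) ∨
    (U 1 0 ≠ 0 ∧ U 0 1 = - t ^ 2 * U 1 0) := by
  have e00 := congrFun (congrFun h 0) 0
  have e01 := congrFun (congrFun h 0) 1
  have e10 := congrFun (congrFun h 1) 0
  have e11 := congrFun (congrFun h 1) 1
  simp [Matrix.mul_apply, Fin.sum_univ_two] at e00 e01 e10 e11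
  have hp4' : p ^ 4 - 1 ≠ 0 := sub_ne_zero.mpr hp4
  rcases mono_two hM with ⟨m1, m2, m3, m4⟩ | ⟨m1, m2, m3, m4⟩ <;>
  rcases mono_two hU with ⟨u1, u2, u3, u4⟩ | ⟨u1, u2, u3, u4⟩ <;>
  simp only [m1, m2, u1, u2, mul_zero, zero_mul, add_zero, zero_add] at e00 e01 e10 e11
  · left
    refine ⟨u1, u2, ?_⟩
    apply mul_left_cancel₀ (mul_ne_zero hp ht)
    linear_combination e01 - p * t * e00
  · exfalso
    apply mul_ne_zero hp4' u3
    grind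
  · exfalso
    apply mul_ne_zero hp4' u3
    grind
  · right
    refine ⟨u4, ?_⟩
    apply mul_left_cancel₀ hp
    linear_combination -p * e01 - t * e00

/-- **No non-trivial protected gate for the Fibonacci model on the torus.**
With `φ = (1+√5)/2`, `S = (1/√(φ+2)) [[1, φ], [φ, −1]]` and `T = diag(1, e^{4πi/5})`,
any monomial unitary `2 × 2` matrix `U` such that both `S U S⁻¹` and
`(S T) U (S T)⁻¹` are monomial is a unimodular scalar multiple of the identity. -/
theorem fibonacci_torus_no_protected_gate
    (φ : ℝ) (hφ : φ = (1 + Real.sqrt 5) / 2)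
    (S : Matrix (Fin 2) (Fin 2) ℂ)
    (hS : S = ((Real.sqrt (φ + 2) : ℂ))⁻¹ • !![1, (φ : ℂ); (φ : ℂ), -1])
    (T : Matrix (Fin 2) (Fin 2) ℂ)
    (hT : T = !![1, 0; 0, Complex.exp (4 * Real.pi * Complex.I / 5)])
    (U : Matrix (Fin 2) (Fin 2) ℂ) (hU : U ∈ Matrix.unitaryGroup (Fin 2) ℂ)
    (hUmono : U.IsMonomial)
    (hS_int : (S * U * S⁻¹).IsMonomial)
    (hST_int : ((S * T) * U * (S * T)⁻¹).IsMonomial) :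
    ∃ lam : ℂ, ‖lam‖ = 1 ∧ U = lam • (1 : Matrix (Fin 2) (Fin 2) ℂ) := by
  have h5 : Real.sqrt 5 ^ 2 = 5 := Real.sq_sqrt (by norm_num)
  have h50 : 0 ≤ Real.sqrt 5 := Real.sqrt_nonneg 5
  have hφ1 : 1 < φ := by rw [hφ]; nlinarith
  have hφ4 : 1 < φ ^ 4 := one_lt_pow₀ hφ1 (by norm_num)
  have hφ0 : (φ : ℂ) ≠ 0 := by exact_mod_cast (by linarith : φ ≠ 0)
  have hp4 : (φ : ℂ) ^ 4 ≠ 1 := by exact_mod_cast hφ4.ne'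
  have hc : ((Real.sqrt (φ + 2) : ℂ))⁻¹ ≠ 0 := by
    apply inv_ne_zero
    exact_mod_cast (Real.sqrt_pos.mpr (by linarith : 0 < φ + 2)).ne'
  generalize ((Real.sqrt (φ + 2) : ℂ))⁻¹ = c at hS hc
  have ht0 := Complex.exp_ne_zero (4 * Real.pi * Complex.I / 5)
  have ht2 : Complex.exp (4 * Real.pi * Complex.I / 5) ^ 2 ≠ 1 := by
    rw [← Complex.exp_nat_mul]
    intro h
    obtain ⟨n, hn⟩ := Complex.exp_eq_one_iff.mp h
    have hpi : (Real.pi : ℂ) * Complex.I ≠ 0 :=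
      mul_ne_zero (by exact_mod_cast Real.pi_ne_zero) Complex.I_ne_zero
    have h4 : (4 : ℂ) = 5 * n := by
      apply mul_left_cancel₀ hpi
      push_cast at hn
      linear_combination (5 / 2) * hn
    have h4' : (4 : ℤ) = 5 * n := by exact_mod_cast h4
    omega
  generalize Complex.exp (4 * Real.pi * Complex.I / 5) = t at hT ht0 ht2
  have hφ2 : (1 : ℂ) + φ ^ 2 ≠ 0 := by exact_mod_cast (by positivity : (1 : ℝ) + φ ^ 2 ≠ 0)
  have hST : S * T = c • !![1, (φ : ℂ) * t; (φ : ℂ), -t] := by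
    rw [hS, hT]
    ext i j
    fin_cases i <;> fin_cases j <;> simp [Matrix.mul_apply, Fin.sum_univ_two, mul_assoc]
  have hS' : S = c • !![1, (φ : ℂ) * 1; (φ : ℂ), -1] := by rw [hS, mul_one]
  have conj : ∀ (A : Matrix (Fin 2) (Fin 2) ℂ) (s : ℂ), s ≠ 0 →
      A = c • !![1, (φ : ℂ) * s; (φ : ℂ), -s] →
      (A * U * A⁻¹) * !![1, (φ : ℂ) * s; (φ : ℂ), -s] =
        !![1, (φ : ℂ) * s; (φ : ℂ), -s] * U := by
    intro A s hs hA
    have hdet : IsUnit A.det := by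
      have : A.det = -(c ^ 2 * s * (1 + (φ : ℂ) ^ 2)) := by
        rw [hA, Matrix.det_fin_two]; simp; ring
      rw [this, isUnit_iff_ne_zero]
      exact neg_ne_zero.mpr (mul_ne_zero (mul_ne_zero (pow_ne_zero 2 hc) hs) hφ2)
    have h1 : (A * U * A⁻¹) * A = A * U := Matrix.nonsing_inv_mul_cancel_right _ _ hdet
    generalize A * U * A⁻¹ = M at h1 ⊢
    rw [hA, Matrix.mul_smul, Matrix.smul_mul] at h1
    exact smul_right_injective _ hc h1
  have k1 := key_two (φ : ℂ) 1 hφ0 one_ne_zero hp4 hS_int hUmono (conj S 1 one_ne_zero hS')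
  have k2 := key_two (φ : ℂ) t hφ0 ht0 hp4 hST_int hUmono (conj (S * T) t ht0 hST)
  have diag : U 0 1 = 0 ∧ U 1 0 = 0 ∧ U 0 0 = U 1 1 := by
    rcases k1 with k1 | ⟨n1, k1⟩
    · exact k1
    · rcases k2 with k2 | ⟨n2, k2⟩
      · exact k2
      · exfalso
        apply ht2
        apply mul_right_cancel₀ n1
        linear_combination k2 - k1
  obtain ⟨u1, u2, u3⟩ := diag
  refine ⟨U 0 0, ?_, ?_⟩
  · have h := congrFun (congrFun (Matrix.mem_unitaryGroup_iff.mp hU) 0) 0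
    simp [Matrix.mul_apply, Fin.sum_univ_two, u1, Matrix.star_apply, Complex.mul_conj] at h
    have h' : Complex.normSq (U 0 0) = 1 := by exact_mod_cast h
    rw [Complex.normSq_eq_norm_sq] at h'
    exact (pow_eq_one_iff_of_nonneg (norm_nonneg _) two_ne_zero).mp h'
  · ext i j
    fin_cases i <;> fin_cases j <;> simp [u1, u2, u3]
end

section
/- Let n ≥ 1 and let S be a unitary n×n complex matrix (indices in Fin n, with distinguished index 0) such that every entry of S is nonzero, S_{a,0} = S_{0,a} = 1/√n for all a, and there is an involution ι of Fin n with S_{a,ι(b)} = conj(S_{a,b}) for all a, b. Let π be a permutation of Fin n and define the matrix Λ by Λ_{b,d} = Σ_a S_{b,a} · conj(S_{d,π(a)}). Then every unitary n×n matrix Λ' satisfying Λ_{a,c} · Λ'_{b,d} · (S_{c,d} − S_{a,b}) = 0 for all a, b, c, d is monomial; that is, there exist a permutation π̃ of Fin n and real phases θ_b such that Λ'_{b,d} = e^{iθ_b} if d = π̃(b) and Λ'_{b,d} = 0 otherwise. -/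
open scoped BigOperators Matrix

/-- **Abelian anyon models: protected gates permute string operators.**
Let `S` be a unitary `n × n` matrix with all entries nonzero, distinguished row and
column constantly `1/√n`, and a charge-conjugation symmetry given by an involution `ι`.
Given a permutation `π`, let `Λ b d = ∑ a, S b a * conj (S d (π a))`.  Then any unitary
`Λ'` satisfying the consistency condition `Λ a c * Λ' b d * (S c d − S a b) = 0` for all
`a, b, c, d` is monomial: there are a permutation `π̃` and phases `θ b` with
`Λ' b d = e^{iθ_b}` if `d = π̃ b` and `Λ' b d = 0` otherwise. -/
theorem abelian_string_operators_permuted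
    (n : ℕ) [NeZero n]
    (S : Matrix (Fin n) (Fin n) ℂ) (hS : S ∈ Matrix.unitaryGroup (Fin n) ℂ)
    (hnz : ∀ a b, S a b ≠ 0)
    (hcol : ∀ a, S a 0 = 1 / (Real.sqrt n : ℂ))
    (hrow : ∀ a, S 0 a = 1 / (Real.sqrt n : ℂ))
    (ι : Fin n → Fin n) (hι : Function.Involutive ι)
    (hιS : ∀ a b, S a (ι b) = (starRingEnd ℂ) (S a b))
    (π : Equiv.Perm (Fin n))
    (Λ : Matrix (Fin n) (Fin n) ℂ)
    (hΛ : ∀ b d, Λ b d = ∑ a, S b a * (starRingEnd ℂ) (S d (π a))) :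
    ∀ Λ' : Matrix (Fin n) (Fin n) ℂ, Λ' ∈ Matrix.unitaryGroup (Fin n) ℂ →
      (∀ a b c d, Λ a c * Λ' b d * (S c d - S a b) = 0) →
      ∃ (πt : Equiv.Perm (Fin n)) (θ : Fin n → ℝ),
        ∀ b d, Λ' b d =
          if d = πt b then Complex.exp ((θ b : ℂ) * Complex.I) else 0 := by
  intro Λ' hU hcons
  have hS1 : star S * S = 1 := (Matrix.mem_unitaryGroup_iff').1 hS
  have hU1 : Λ' * star Λ' = 1 := (Matrix.mem_unitaryGroup_iff).1 hU
  -- every column of `Λ` is nonzero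
  have hcolΛ : ∀ c, ∃ a, Λ a c ≠ 0 := by
    intro c
    by_contra! h
    have hv : S *ᵥ (fun a => (starRingEnd ℂ) (S c (π a))) = 0 := by
      funext b
      have := h b
      rw [hΛ] at this
      simpa [Matrix.mulVec, dotProduct] using this
    have h0 : (fun a => (starRingEnd ℂ) (S c (π a))) = 0 := by
      have := congrArg (fun v => star S *ᵥ v) hv
      simpa [Matrix.mulVec_mulVec, hS1] using this
    have := congrFun h0 0
    simp [hnz] at this
  -- distinct columns of `S` differ
  have hSinj : ∀ d d', (∀ c, S c d = S c d') → d = d' := by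
    intro d d' h
    by_contra hne
    have h1 := congrFun (congrFun hS1 d) d
    have h2 := congrFun (congrFun hS1 d) d'
    rw [Matrix.mul_apply] at h1 h2
    rw [Matrix.one_apply_eq] at h1
    rw [Matrix.one_apply_ne hne] at h2
    simp only [← h] at h2
    rw [h1] at h2
    exact one_ne_zero h2
  have huniq : ∀ b d d', Λ' b d ≠ 0 → Λ' b d' ≠ 0 → d = d' := by
    intro b d d' h h'
    apply hSinj
    intro c
    obtain ⟨a, ha⟩ := hcolΛ c
    have e1 := hcons a b c d
    have e2 := hcons a b c d'
    simp only [mul_eq_zero, ha, h, h', false_or, sub_eq_zero] at e1 e2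
    rw [e1, e2]
  have hrowsum : ∀ b b', ∑ d, Λ' b d * star (Λ' b' d) = (1 : Matrix (Fin n) (Fin n) ℂ) b b' := by
    intro b b'
    rw [← hU1, Matrix.mul_apply]
    rfl
  have hex : ∀ b, ∃ d, Λ' b d ≠ 0 := by
    intro b
    by_contra! h
    have := hrowsum b b
    simp [h] at this
  choose f hf using hex
  have hz : ∀ b d, d ≠ f b → Λ' b d = 0 := by
    intro b d hd
    by_contra h
    exact hd (huniq b d (f b) h (hf b))
  have hsingle : ∀ b b', Λ' b (f b) * star (Λ' b' (f b)) =
      (1 : Matrix (Fin n) (Fin n) ℂ) b b' := by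
    intro b b'
    rw [← hrowsum b b']
    symm
    apply Fintype.sum_eq_single
    intro d hd
    rw [hz b d hd, zero_mul]
  have hfinj : Function.Injective f := by
    intro b b' h
    by_contra hne
    have := hsingle b b'
    rw [Matrix.one_apply_ne hne, h] at this
    rcases mul_eq_zero.1 this with h1 | h1
    · exact hf b (h ▸ h1)
    · exact hf b' (star_eq_zero.1 h1)
  have hnorm : ∀ b, ‖Λ' b (f b)‖ = 1 := by
    intro b
    have h := congrArg norm (hsingle b b)
    rw [Matrix.one_apply_eq, norm_mul, norm_star, norm_one] at h
    nlinarith [norm_nonneg (Λ' b (f b))]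
  refine ⟨Equiv.ofBijective f (Finite.injective_iff_bijective.1 hfinj),
    fun b => Complex.arg (Λ' b (f b)), ?_⟩
  intro b d
  rw [Equiv.ofBijective_apply]
  split_ifs with h
  · have := Complex.norm_mul_exp_arg_mul_I (Λ' b (f b))
    rw [hnorm, Complex.ofReal_one, one_mul] at this
    rw [h, this]
  · exact hz b d h
end

section
/- Let V₁, …, V_M be unitary n×n complex matrices, and define Δ = {U unitary n×n : U is monomial and V_k U V_k⁻¹ is monomial for every k} and T = {D unitary n×n : D is diagonal and V_k D V_k⁻¹ is diagonal for every k}. Let L = lcm(1, 2, …, n). Then for every U ∈ Δ, the power U^L belongs to T; in particular U^L is diagonal and V_k U^L V_k⁻¹ is diagonal for every k. -/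
open scoped Matrix

theorem perm_pow_lcm_eq_one {n : ℕ} (σ : Equiv.Perm (Fin n)) :
    σ ^ ((Finset.Icc 1 n).lcm id) = 1 := by
  rw [← orderOf_dvd_iff_pow_eq_one, ← Equiv.Perm.lcm_cycleType, Multiset.lcm_dvd]
  intro b hb
  have h1 : 2 ≤ b := Equiv.Perm.two_le_of_mem_cycleType hb
  have h2 : b ≤ n := by
    have h3 := Multiset.le_sum_of_mem hb
    rw [Equiv.Perm.sum_cycleType] at h3
    have h4 := Finset.card_le_univ σ.support
    rw [Fintype.card_fin] at h4
    omega
  exact Finset.dvd_lcm (f := id) (Finset.mem_Icc.2 ⟨by omega, h2⟩)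

theorem Matrix.IsMonomial.pow_lcm_isDiag {n : ℕ} {A : Matrix (Fin n) (Fin n) ℂ}
    (hA : A.IsMonomial) : (A ^ ((Finset.Icc 1 n).lcm id)).IsDiag := by
  obtain ⟨hr, hc⟩ := hA
  choose f hf hfu using hr
  have hinj : Function.Injective f := by
    intro i i' h
    have h' := hf i'
    simp only at h'
    rw [← h] at h'
    exact (hc (f i)).unique (hf i) h'
  let σ : Equiv.Perm (Fin n) := Equiv.ofBijective f (Finite.injective_iff_bijective.1 hinj)
  have key : ∀ k : ℕ, ∀ i j, (A ^ k) i j ≠ 0 → j = (σ ^ k) i := by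
    intro k
    induction k with
    | zero =>
      intro i j h
      by_contra hne
      apply h
      simp at hne
      simp [Ne.symm hne]
    | succ k ih =>
      intro i j h
      rw [pow_succ, Matrix.mul_apply] at h
      obtain ⟨l, -, hl⟩ := Finset.exists_ne_zero_of_sum_ne_zero h
      have h1 := ih i l (left_ne_zero_of_mul hl)
      have h2 := hfu l j (right_ne_zero_of_mul hl)
      rw [pow_succ', Equiv.Perm.mul_apply, ← h1, h2]
      rfl
  intro i j hij
  by_contra h
  have := key _ i j h
  rw [perm_pow_lcm_eq_one] at this
  exact hij this.symm

/-- **Every protected gate has trivial action up to a bounded power.**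
Given unitaries `V₁, …, V_M`, let `Δ` consist of the monomial unitaries remaining
monomial under conjugation by every `V_k`, and let `L = lcm(1, …, n)`.  Then for every
`U ∈ Δ`, the power `U^L` is a diagonal unitary and `V_k U^L V_k⁻¹` is diagonal for
every `k`; i.e. `U^L` belongs to the subgroup `T` of diagonal intertwiners. -/
theorem protected_gate_power_diagonal
    (n M : ℕ) (V : Fin M → Matrix (Fin n) (Fin n) ℂ)
    (hV : ∀ k, V k ∈ Matrix.unitaryGroup (Fin n) ℂ)
    (L : ℕ) (hL : L = (Finset.Icc 1 n).lcm id)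
    (U : Matrix (Fin n) (Fin n) ℂ) (hU : U ∈ Matrix.unitaryGroup (Fin n) ℂ)
    (hUmono : U.IsMonomial)
    (hconj : ∀ k, (V k * U * (V k)⁻¹).IsMonomial) :
    U ^ L ∈ Matrix.unitaryGroup (Fin n) ℂ ∧ (U ^ L).IsDiag ∧
      ∀ k, (V k * U ^ L * (V k)⁻¹).IsDiag := by
  subst hL
  refine ⟨pow_mem hU _, hUmono.pow_lcm_isDiag, fun k => ?_⟩
  have hd : IsUnit (V k).det := by
    have h := Matrix.mem_unitaryGroup_iff.1 (hV k)
    exact Matrix.isUnit_det_of_right_inverse h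
  have hinv : (V k)⁻¹ * V k = 1 := Matrix.nonsing_inv_mul _ hd
  have hinv2 : V k * (V k)⁻¹ = 1 := Matrix.mul_nonsing_inv _ hd
  have hp : ∀ m : ℕ, (V k * U * (V k)⁻¹) ^ m = V k * U ^ m * (V k)⁻¹ := by
    intro m
    induction m with
    | zero => simp [hinv2]
    | succ m ih =>
      rw [pow_succ, ih, pow_succ]
      calc V k * U ^ m * (V k)⁻¹ * (V k * U * (V k)⁻¹)
          = V k * U ^ m * ((V k)⁻¹ * V k) * U * (V k)⁻¹ := by simp only [mul_assoc]
        _ = _ := by rw [hinv]; simp only [mul_assoc, mul_one]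
  rw [← hp]
  exact (hconj k).pow_lcm_isDiag
end

section
/- Let W be a finite-dimensional complex vector space, A a finite index set, and {F_a}_{a∈A}, {G_b}_{b∈A} two families of linear operators on W such that the family of products {F_c ∘ G_d}_{(c,d) ∈ A×A} is linearly independent and such that G_b ∘ F_a = μ_{a,b} · F_a ∘ G_b for all a, b ∈ A, where μ_{a,b} ∈ ℂ. Suppose U is an invertible linear operator on W and Λ, Λ' are A×A complex matrices with U F_a U⁻¹ = Σ_{c∈A} Λ_{a,c} F_c and U G_b U⁻¹ = Σ_{d∈A} Λ'_{b,d} G_d for all a, b. Then Λ_{a,c} · Λ'_{b,d} · (μ_{c,d} − μ_{a,b}) = 0 for all a, b, c, d ∈ A. -/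
open scoped BigOperators

/-- **Consistency constraint from commutation phases of string operators.**
Let `W` be a finite-dimensional complex vector space, `{F a}` and `{G b}` families of
operators whose pairwise products `F c ∘ G d` are linearly independent and which satisfy
the commutation relations `G b ∘ F a = μ a b • (F a ∘ G b)`.  If an invertible operator
`U` conjugates each family into its own span with coefficient matrices `Λ` and `Λ'`,
then `Λ a c * Λ' b d * (μ c d − μ a b) = 0` for all `a, b, c, d`. -/
theorem string_operator_consistency
    {W : Type*} [AddCommGroup W] [Module ℂ W] [FiniteDimensional ℂ W]
    {A : Type*} [Fintype A]
    (F G : A → (W →ₗ[ℂ] W))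
    (hindep : LinearIndependent ℂ (fun p : A × A => F p.1 ∘ₗ G p.2))
    (μ : A → A → ℂ)
    (hcomm : ∀ a b, G b ∘ₗ F a = μ a b • (F a ∘ₗ G b))
    (U : W ≃ₗ[ℂ] W)
    (Λ Λ' : Matrix A A ℂ)
    (hF : ∀ a, (U : W →ₗ[ℂ] W) ∘ₗ F a ∘ₗ (U.symm : W →ₗ[ℂ] W) = ∑ c, Λ a c • F c)
    (hG : ∀ b, (U : W →ₗ[ℂ] W) ∘ₗ G b ∘ₗ (U.symm : W →ₗ[ℂ] W) = ∑ d, Λ' b d • G d) :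
    ∀ a b c d, Λ a c * Λ' b d * (μ c d - μ a b) = 0 := by
  intro a b c d
  have key : (∑ d, Λ' b d • G d) ∘ₗ (∑ c, Λ a c • F c)
      = μ a b • ((∑ c, Λ a c • F c) ∘ₗ (∑ d, Λ' b d • G d)) := by
    rw [← hF, ← hG]
    ext x
    have h := congrArg U (LinearMap.congr_fun (hcomm a b) (U.symm x))
    simpa using h
  have e1 : (∑ d, Λ' b d • G d) ∘ₗ (∑ c, Λ a c • F c)
      = ∑ c, ∑ d, (Λ a c * Λ' b d * μ c d) • (F c ∘ₗ G d) := by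
    rw [← Module.End.mul_eq_comp, Finset.sum_mul_sum, Finset.sum_comm]
    refine Finset.sum_congr rfl fun c _ => Finset.sum_congr rfl fun d _ => ?_
    rw [smul_mul_smul_comm, Module.End.mul_eq_comp, hcomm, smul_smul, mul_comm (Λ' b d)]
  have e2 : (∑ c, Λ a c • F c) ∘ₗ (∑ d, Λ' b d • G d)
      = ∑ c, ∑ d, (Λ a c * Λ' b d) • (F c ∘ₗ G d) := by
    rw [← Module.End.mul_eq_comp, Finset.sum_mul_sum]
    refine Finset.sum_congr rfl fun c _ => Finset.sum_congr rfl fun d _ => ?_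
    rw [smul_mul_smul_comm, Module.End.mul_eq_comp]
  refine Fintype.linearIndependent_iff.mp hindep
    (fun p => Λ a p.1 * Λ' b p.2 * (μ p.1 p.2 - μ a b)) ?_ (c, d)
  rw [Fintype.sum_prod_type]
  rw [e1, e2, ← sub_eq_zero, Finset.smul_sum, ← Finset.sum_sub_distrib] at key
  rw [← key]
  refine Finset.sum_congr rfl fun c _ => ?_
  rw [Finset.smul_sum, ← Finset.sum_sub_distrib]
  refine Finset.sum_congr rfl fun d _ => ?_
  rw [smul_smul, ← sub_smul]
  congr 1
  ring
end
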